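/- For every integer n ≥ 3, C^{4,2}_n = 1 + 5·3^{n−3} − 2^{n−3}. -/

import Mathlib

/-- Full binary trees (every internal node has exactly two children). -/
inductive BTree : Type
  | leaf : BTree
  | node : BTree → BTree → BTree
deriving DecidableEq

namespace BTree

/-- Number of leaves of a full binary tree. -/
def numLeaves : BTree → ℕ
  | leaf => 1
  | node l r => l.numLeaves + r.numLeaves

/-- The list of pairs (left depth, right depth) of the leaves, in preorder. -/
def leafDepths : BTree → List (ℕ × ℕ)
  | leaf => [(0, 0)]
  | node l r =>
      (l.leafDepths.map fun p => (p.1 + 1, p.2)) ++ (r.leafDepths.map fun p => (p.1, p.2 + 1))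

/-- The left depth sequence `ld(t)` of the leaves of `t`, in preorder. -/
def ld (t : BTree) : List ℕ := t.leafDepths.map Prod.fst

/-- The right depth sequence `rd(t)` of the leaves of `t`, in preorder. -/
def rd (t : BTree) : List ℕ := t.leafDepths.map Prod.snd

end BTree

/-- `b ~^d c` : the sequences have equal length and agree at every position where
either entry is `< d`. -/
def DepthEq (d : ℕ) : List ℕ → List ℕ → Prop :=
  List.Forall₂ (fun a b => min a b < d → a = b)

/-- `b ~_k c` : entrywise congruence mod `k` (and equal length). -/
def ModListEq (k : ℕ) : List ℕ → List ℕ → Prop :=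
  List.Forall₂ (fun a b => a % k = b % k)

/-- The relation `t ~ t'` iff `ld(t) ~^d ld(t')` and `rd(t) ~^e rd(t')`. -/
def DeRel (d e : ℕ) (t t' : BTree) : Prop :=
  DepthEq d t.ld t'.ld ∧ DepthEq e t.rd t'.rd

/-- The relation `t ~ t'` iff `ld(t) ~_k^d ld(t')` (i.e. `ld(t) ~_k ld(t')` and
`ld(t) ~^d ld(t')`). -/
def DkRel (d k : ℕ) (t t' : BTree) : Prop :=
  ModListEq k t.ld t'.ld ∧ DepthEq d t.ld t'.ld

/-- `T_n`: full binary trees with `n+1` leaves. -/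
def Tn (n : ℕ) : Type := {t : BTree // t.numLeaves = n + 1}

/-- `C^{d,e}_n`: the number of equivalence classes of the relation `DeRel d e` on `T_n`. -/
noncomputable def Cde (d e n : ℕ) : ℕ :=
  Nat.card (Quot (fun t t' : Tn n => DeRel d e t.1 t'.1))

/-- `C^d_{k,n}`: the number of equivalence classes of `ld(t) ~_k^d ld(t')` on `T_n`. -/
noncomputable def Cdk (d k n : ℕ) : ℕ :=
  Nat.card (Quot (fun t t' : Tn n => DkRel d k t.1 t'.1))

open Finset.HasAntidiagonal PowerSeries

/-!
If `d ≥ 2` or `e ≥ 2`, the class of a tree `node l r` determines the number of leaves of `l`: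
the last leaf of `l` is the first leaf of left depth `1`, and the first leaf of `r` is the last
leaf of right depth `1`. Hence classes split the way trees do, and the generating functions `B d e`
of the numbers `C^{d,e}_n` satisfy `B d e = 1 + X * B (d - 1) e * B d (e - 1)`, whereas
`B d e = 1 / (1 - X)` for `d, e ≤ 1`. With `P 0 = 1`, `P 1 = 1 - X` and
`P (d + 2) = P (d + 1) - X * P d` this gives `B d 1 = P (d - 1) / P d` for `d ≥ 1`, so that the
products met when unfolding `B 4 2` telescope; what remains is a rational function with denominator
`P 2 * P 4 = (1 - X) * (1 - 2 * X) * (1 - 3 * X)`.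
-/

theorem mk_pow_mul_one_sub_C_mul_X {R : Type*} [CommRing R] (a : R) :
    (.mk (a ^ ·) : R⟦X⟧) * (1 - C a * X) = 1 := by
  simpa [rescale_mk] using congrArg (rescale a) (mk_one_mul_one_sub_eq_one R)

namespace DepthEq

variable {d : ℕ} {a a' b b' : List ℕ}

theorem iff_map_min_eq : DepthEq d a b ↔ a.map (min · d) = b.map (min · d) := by
  have key : ∀ x y : ℕ, (min x y < d → x = y) ↔ min x d = min y d := by omega
  simp only [DepthEq, key]
  rw [← List.forall₂_eq_eq_eq, List.forall₂_map_left_iff, List.forall₂_map_right_iff]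

theorem equivalence (d : ℕ) : Equivalence (DepthEq d) where
  refl _ := iff_map_min_eq.2 rfl
  symm h := iff_map_min_eq.2 (iff_map_min_eq.1 h).symm
  trans h h' := iff_map_min_eq.2 ((iff_map_min_eq.1 h).trans (iff_map_min_eq.1 h'))

theorem zero_iff : DepthEq 0 a b ↔ a.length = b.length := by
  simp [DepthEq, List.forall₂_iff_get]

theorem append_iff (h : a.length = a'.length) :
    DepthEq d (a ++ b) (a' ++ b') ↔ DepthEq d a a' ∧ DepthEq d b b' := by
  simp only [iff_map_min_eq, List.map_append]
  exact List.append_eq_append_iff_of_size_eq_left (by simpa using h)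

-- For `d = 0` the truncated `d - 1 = 0` is the right index: `~^0` only compares lengths.
theorem map_succ_iff :
    DepthEq d (a.map (· + 1)) (b.map (· + 1)) ↔ DepthEq (d - 1) a b := by
  have key : ∀ x y : ℕ, (min (x + 1) (y + 1) < d → x + 1 = y + 1) ↔
      (min x y < d - 1 → x = y) := by omega
  simp only [DepthEq, List.forall₂_map_left_iff, List.forall₂_map_right_iff, key]

theorem reverse_iff : DepthEq d a.reverse b.reverse ↔ DepthEq d a b :=
  List.forall₂_reverse_iff

theorem idxOf_eq (h : DepthEq d a b) {x : ℕ} (hx : x < d) : a.idxOf x = b.idxOf x := by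
  induction h with
  | nil => rfl
  | @cons y z _ _ hyz _ ih =>
    have hiff : y = x ↔ z = x := by omega
    simp only [List.idxOf_cons, beq_eq_decide, hiff, ih]

end DepthEq

namespace BTree

theorem numLeaves_pos (t : BTree) : 0 < t.numLeaves := by
  induction t <;> grind [numLeaves]

theorem length_leafDepths (t : BTree) : t.leafDepths.length = t.numLeaves := by
  induction t with
  | leaf => rfl
  | node l r hl hr => simp [leafDepths, numLeaves, hl, hr]

theorem length_ld (t : BTree) : t.ld.length = t.numLeaves := by
  simp [ld, length_leafDepths]

theorem length_rd (t : BTree) : t.rd.length = t.numLeaves := by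
  simp [rd, length_leafDepths]

theorem ld_node (l r : BTree) : (node l r).ld = l.ld.map (· + 1) ++ r.ld := by
  simp [ld, leafDepths, Function.comp_def]

theorem rd_node (l r : BTree) : (node l r).rd = l.rd ++ r.rd.map (· + 1) := by
  simp [rd, leafDepths, Function.comp_def]

theorem exists_ld_eq (t : BTree) : ∃ a : List ℕ, t.ld = a.map (· + 1) ++ [0] := by
  induction t with
  | leaf => exact ⟨[], rfl⟩
  | node l r _ ih =>
    obtain ⟨a, ha⟩ := ih
    exact ⟨l.ld ++ a, by simp [ld_node, ha]⟩

theorem idxOf_one_ld_node (l r : BTree) : (node l r).ld.idxOf 1 + 1 = l.numLeaves := by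
  obtain ⟨a, ha⟩ := l.exists_ld_eq
  have hlen : l.numLeaves = a.length + 1 := by simp [← length_ld, ha]
  have hnot : 1 ∉ (a.map (· + 1)).map (· + 1) := by simp
  rw [ld_node, ha, hlen, List.map_append, List.append_assoc, List.idxOf_append_of_notMem hnot]
  simp

/-- The mirror image of a tree, exchanging the roles of left and right depths. -/
def mirror : BTree → BTree
  | leaf => leaf
  | node l r => node r.mirror l.mirror

theorem ld_mirror (t : BTree) : t.mirror.ld = t.rd.reverse := by
  induction t with
  | leaf => rfl
  | node l r hl hr => simp [mirror, ld_node, rd_node, hl, hr]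

theorem rd_mirror (t : BTree) : t.mirror.rd = t.ld.reverse := by
  induction t with
  | leaf => rfl
  | node l r hl hr => simp [mirror, ld_node, rd_node, hl, hr]

theorem numLeaves_mirror (t : BTree) : t.mirror.numLeaves = t.numLeaves := by
  rw [← length_ld, ld_mirror, List.length_reverse, length_rd]

theorem mirror_involutive : Function.Involutive mirror := by
  intro t
  induction t with
  | leaf => rfl
  | node l r hl hr => simp [mirror, hl, hr]

theorem depthEq_ld_of_le_one {d : ℕ} {t t' : BTree} (hd : d ≤ 1) (h : t.numLeaves = t'.numLeaves) :
    DepthEq d t.ld t'.ld := by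
  obtain ⟨a, ha⟩ := t.exists_ld_eq
  obtain ⟨a', ha'⟩ := t'.exists_ld_eq
  have hlen : a.length = a'.length := by simpa [← length_ld, ha, ha'] using h
  rw [ha, ha', DepthEq.append_iff (by simpa using hlen), DepthEq.map_succ_iff,
    Nat.sub_eq_zero_of_le hd, DepthEq.zero_iff]
  exact ⟨hlen, (DepthEq.equivalence d).refl _⟩

end BTree

namespace DeRel

open BTree

variable {d e : ℕ} {t t' l l' r r' : BTree}

theorem equivalence (d e : ℕ) : Equivalence (DeRel d e) where
  refl _ := ⟨(DepthEq.equivalence d).refl _, (DepthEq.equivalence e).refl _⟩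
  symm h := ⟨(DepthEq.equivalence d).symm h.1, (DepthEq.equivalence e).symm h.2⟩
  trans h h' :=
    ⟨(DepthEq.equivalence d).trans h.1 h'.1, (DepthEq.equivalence e).trans h.2 h'.2⟩

theorem numLeaves_eq (h : DeRel d e t t') : t.numLeaves = t'.numLeaves := by
  simpa only [length_ld] using List.Forall₂.length_eq h.1

theorem mirror_iff : DeRel e d t.mirror t'.mirror ↔ DeRel d e t t' := by
  simp only [DeRel, ld_mirror, rd_mirror, DepthEq.reverse_iff, and_comm]

theorem of_le_one (hd : d ≤ 1) (he : e ≤ 1) (h : t.numLeaves = t'.numLeaves) :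
    DeRel d e t t' := by
  refine ⟨depthEq_ld_of_le_one hd h, ?_⟩
  rw [← DepthEq.reverse_iff, ← ld_mirror, ← ld_mirror]
  exact depthEq_ld_of_le_one he (by simpa only [numLeaves_mirror] using h)

theorem node_iff (h : l.numLeaves = l'.numLeaves) :
    DeRel d e (node l r) (node l' r') ↔ DeRel (d - 1) e l l' ∧ DeRel d (e - 1) r r' := by
  simp only [DeRel, ld_node, rd_node]
  rw [DepthEq.append_iff (by simpa [length_ld] using h),
    DepthEq.append_iff (by simpa [length_rd] using h), DepthEq.map_succ_iff, DepthEq.map_succ_iff]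
  tauto

theorem numLeaves_left_eq (hde : 2 ≤ d ∨ 2 ≤ e) (h : DeRel d e (node l r) (node l' r')) :
    l.numLeaves = l'.numLeaves := by
  rcases hde with hd | he
  · rw [← idxOf_one_ld_node l r, ← idxOf_one_ld_node l' r', h.1.idxOf_eq hd]
  · have hr : r.numLeaves = r'.numLeaves := by
      rw [← numLeaves_mirror r, ← numLeaves_mirror r', ← idxOf_one_ld_node _ l.mirror,
        ← idxOf_one_ld_node _ l'.mirror]
      exact congrArg (· + 1) ((mirror_iff.2 h).1.idxOf_eq he)
    have hsum := h.numLeaves_eq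
    simp only [numLeaves] at hsum
    omega

end DeRel

namespace Tn

/-- The tree with subtrees `l` and `r`, as an operation `T_i × T_j → T_{i+j+1}`. -/
def node {i j n : ℕ} (h : i + j = n) (l : Tn i) (r : Tn j) : Tn (n + 1) :=
  ⟨.node l.1 r.1, by rw [BTree.numLeaves, l.2, r.2]; omega⟩

theorem eq_leaf (t : Tn 0) : t.1 = .leaf := by
  rcases t with ⟨_ | ⟨l, r⟩, h⟩
  · rfl
  · grind [BTree.numLeaves, BTree.numLeaves_pos l, BTree.numLeaves_pos r]

theorem exists_eq_node {n : ℕ} (t : Tn (n + 1)) :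
    ∃ (i j : ℕ) (h : i + j = n) (l : Tn i) (r : Tn j), t = node h l r := by
  rcases t with ⟨_ | ⟨l, r⟩, h⟩
  · simp [BTree.numLeaves] at h
  · have hl := l.numLeaves_pos
    have hr := r.numLeaves_pos
    rw [BTree.numLeaves] at h
    exact ⟨l.numLeaves - 1, r.numLeaves - 1, by omega, ⟨l, by omega⟩, ⟨r, by omega⟩, rfl⟩

instance nonempty (n : ℕ) : Nonempty (Tn n) := by
  induction n with
  | zero => exact ⟨.leaf, rfl⟩
  | succ n ih => exact ⟨node (zero_add n) ⟨.leaf, rfl⟩ ih.some⟩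

instance finite (n : ℕ) : Finite (Tn n) := by
  induction n using Nat.strong_induction_on with
  | _ n ih =>
    rcases n with _ | n
    · have : Subsingleton (Tn 0) := ⟨fun t t' => Subtype.ext (t.eq_leaf.trans t'.eq_leaf.symm)⟩
      infer_instance
    · have (p : antidiagonal n) : Finite (Tn p.1.1 × Tn p.1.2) := by
        have hp := mem_antidiagonal.1 p.2
        have := ih p.1.1 (by omega)
        have := ih p.1.2 (by omega)
        infer_instance
      refine Finite.of_surjective
        (fun x : Σ p : antidiagonal n, Tn p.1.1 × Tn p.1.2 =>
          node (mem_antidiagonal.1 x.1.2) x.2.1 x.2.2) fun t => ?_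
      obtain ⟨i, j, h, l, r, rfl⟩ := t.exists_eq_node
      exact ⟨⟨⟨(i, j), mem_antidiagonal.2 h⟩, l, r⟩, rfl⟩

/-- Reflection as a permutation of `T_n`. -/
def mirrorEquiv (n : ℕ) : Tn n ≃ Tn n :=
  (BTree.mirror_involutive.toPerm _).subtypeEquiv fun _ => by
    simp [BTree.numLeaves_mirror]

end Tn

/-- The set of `DeRel d e`-classes of `T_n`, whose cardinality is `C^{d,e}_n`. -/
abbrev DeClass (d e n : ℕ) : Type := Quot fun t t' : Tn n => DeRel d e t.1 t'.1

namespace DeClass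

variable {d e n : ℕ}

theorem mk_eq_mk_iff {t t' : Tn n} :
    (Quot.mk _ t : DeClass d e n) = Quot.mk _ t' ↔ DeRel d e t.1 t'.1 :=
  ((DeRel.equivalence d e).comap Subtype.val).quot_mk_eq_iff t t'

/-- The class of the tree whose subtrees lie in given classes. -/
def node {i j : ℕ} (h : i + j = n) :
    DeClass (d - 1) e i → DeClass d (e - 1) j → DeClass d e (n + 1) :=
  Quot.map₂ (Tn.node h)
    (fun _ _ _ hr => (DeRel.node_iff rfl).2 ⟨(DeRel.equivalence _ _).refl _, hr⟩)
    (fun l l' _ hl =>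
      (DeRel.node_iff (l.2.trans l'.2.symm)).2 ⟨hl, (DeRel.equivalence _ _).refl _⟩)

theorem node_bijective (d e n : ℕ) (hde : 2 ≤ d ∨ 2 ≤ e) :
    Function.Bijective
      fun x : Σ p : antidiagonal n, DeClass (d - 1) e p.1.1 × DeClass d (e - 1) p.1.2 =>
        (node (mem_antidiagonal.1 x.1.2) x.2.1 x.2.2 : DeClass d e (n + 1)) := by
  constructor
  · rintro ⟨⟨⟨i, j⟩, hij⟩, ⟨l⟩, ⟨r⟩⟩ ⟨⟨⟨i', j'⟩, hij'⟩, ⟨l'⟩, ⟨r'⟩⟩ h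
    have hrel : DeRel d e (.node l.1 r.1) (.node l'.1 r'.1) := mk_eq_mk_iff.1 h
    have hleft := hrel.numLeaves_left_eq hde
    obtain ⟨hl, hr⟩ := (DeRel.node_iff hleft).1 hrel
    obtain rfl : i = i' := Nat.succ.inj (l.2.symm.trans (hleft.trans l'.2))
    obtain rfl : j = j' := 
      Nat.add_left_cancel ((mem_antidiagonal.1 hij).trans (mem_antidiagonal.1 hij').symm)
    rw [mk_eq_mk_iff.2 hl, mk_eq_mk_iff.2 hr]
  · rintro ⟨t⟩
    obtain ⟨i, j, h, l, r, rfl⟩ := t.exists_eq_node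
    exact ⟨⟨⟨(i, j), mem_antidiagonal.2 h⟩, Quot.mk _ l, Quot.mk _ r⟩, rfl⟩

end DeClass

theorem cde_succ {d e : ℕ} (hde : 2 ≤ d ∨ 2 ≤ e) (n : ℕ) :
    Cde d e (n + 1) = ∑ p ∈ antidiagonal n, Cde (d - 1) e p.1 * Cde d (e - 1) p.2 := by
  rw [Cde, ← Nat.card_eq_of_bijective _ (DeClass.node_bijective d e n hde), Nat.card_sigma]
  simp only [Nat.card_prod]
  exact Finset.sum_coe_sort (antidiagonal n) fun p => Cde (d - 1) e p.1 * Cde d (e - 1) p.2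

theorem cde_comm (d e n : ℕ) : Cde d e n = Cde e d n :=
  Nat.card_congr (Quot.congr (Tn.mirrorEquiv n) fun _ _ => DeRel.mirror_iff.symm)

theorem cde_eq_one_of_forall_deRel {d e n : ℕ} (h : ∀ t t' : Tn n, DeRel d e t.1 t'.1) :
    Cde d e n = 1 := by
  have : Subsingleton (DeClass d e n) :=
    ⟨by rintro ⟨t⟩ ⟨t'⟩; exact Quot.sound (h t t')⟩
  have : Nonempty (DeClass d e n) := (Tn.nonempty n).map (Quot.mk _)
  exact Nat.card_unique (α := DeClass d e n)

theorem cde_zero (d e : ℕ) : Cde d e 0 = 1 :=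
  cde_eq_one_of_forall_deRel fun t t' => by
    rw [t.eq_leaf, t'.eq_leaf]
    exact (DeRel.equivalence d e).refl _

theorem cde_of_le_one {d e : ℕ} (hd : d ≤ 1) (he : e ≤ 1) (n : ℕ) : Cde d e n = 1 :=
  cde_eq_one_of_forall_deRel fun t t' => DeRel.of_le_one hd he (t.2.trans t'.2.symm)

/-- The generating function `∑ C^{d,e}_n X ^ n`. -/
noncomputable def cdeSeries (d e : ℕ) : ℤ⟦X⟧ := .mk fun n => (Cde d e n : ℤ)

namespace cdeSeries

variable {d e : ℕ}

theorem comm (d e : ℕ) : cdeSeries d e = cdeSeries e d := by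
  simp only [cdeSeries, cde_comm d e]

theorem eq_one_add (hde : 2 ≤ d ∨ 2 ≤ e) :
    cdeSeries d e = 1 + X * (cdeSeries (d - 1) e * cdeSeries d (e - 1)) := by
  ext (_ | n)
  · simp [cdeSeries, cde_zero]
  · rw [map_add, coeff_succ_X_mul, coeff_mul]
    simp [cdeSeries, coeff_one, cde_succ hde]

theorem one_sub_X_mul (hd : d ≤ 1) (he : e ≤ 1) : (1 - X) * cdeSeries d e = 1 := by
  have hone : cdeSeries d e = .mk 1 := by
    ext n
    simp [cdeSeries, cde_of_le_one hd he]
  rw [hone, mul_comm, mk_one_mul_one_sub_eq_one]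

/-- The polynomials `P d` with `P d * B d 0 = P (d - 1)` for `d ≥ 1`, where `B` is the generating
function `cdeSeries`; they are Chebyshev polynomials of the second kind up to rescaling. -/
noncomputable def denom : ℕ → ℤ⟦X⟧
  | 0 => 1
  | 1 => 1 - X
  | d + 2 => denom (d + 1) - X * denom d

theorem denom_mul_cdeSeries_zero (d : ℕ) :
    denom (d + 1) * cdeSeries (d + 1) 0 = denom d := by
  induction d with
  | zero => exact one_sub_X_mul le_rfl zero_le_one
  | succ d ih =>
    have hrec : cdeSeries (d + 2) 0 = 1 + X * (cdeSeries (d + 1) 0 * cdeSeries (d + 2) 0) :=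
      eq_one_add (.inl le_add_self)
    rw [denom]
    linear_combination denom (d + 1) * hrec + X * cdeSeries (d + 2) 0 * ih

theorem denom_mul_cdeSeries_one (d : ℕ) :
    denom (d + 1) * cdeSeries (d + 1) 1 = denom d := by
  induction d with
  | zero => exact one_sub_X_mul le_rfl le_rfl
  | succ d ih =>
    have hrec : cdeSeries (d + 2) 1 = 1 + X * (cdeSeries (d + 1) 1 * cdeSeries (d + 2) 0) :=
      eq_one_add (.inl le_add_self)
    calc denom (d + 2) * cdeSeries (d + 2) 1
        = denom (d + 2) + X * (cdeSeries (d + 1) 1 * (denom (d + 2) * cdeSeries (d + 2) 0)) := by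
          rw [hrec]; ring
      _ = denom (d + 2) + X * denom d := by
          rw [denom_mul_cdeSeries_zero, mul_comm (cdeSeries _ _), ih]
      _ = denom (d + 1) := by rw [denom]; ring

theorem denom_mul_cdeSeries_two (d : ℕ) :
    denom (d + 1) * cdeSeries (d + 1) 2 = denom (d + 1) + X * (denom d * cdeSeries d 2) := by
  have hrec : cdeSeries (d + 1) 2 = 1 + X * (cdeSeries d 2 * cdeSeries (d + 1) 1) :=
    eq_one_add (.inr le_rfl)
  linear_combination denom (d + 1) * hrec + X * cdeSeries d 2 * denom_mul_cdeSeries_one d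

theorem mul_cdeSeries_four_two : (1 - X) * (1 - 2 * X) * (1 - 3 * X) * cdeSeries 4 2 =
    denom 2 * (denom 4 + X * (denom 3 + X * denom 2)) + X ^ 3 * denom 1 ^ 2 := by
  have hdenom : (1 - X) * (1 - 2 * X) * (1 - 3 * X) = denom 2 * denom 4 := by
    simp only [denom]; ring
  have hone_two : denom 2 * cdeSeries 1 2 = denom 1 := by rw [comm, denom_mul_cdeSeries_one]
  rw [hdenom, mul_assoc, denom_mul_cdeSeries_two 3, denom_mul_cdeSeries_two 2,
    denom_mul_cdeSeries_two 1]
  linear_combination X ^ 3 * denom 1 * hone_two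

theorem four_two_eq : cdeSeries 4 2 =
    1 + X + C 2 * X ^ 2 + X ^ 3 * .mk fun m => (1 + 5 * 3 ^ m - 2 ^ m : ℤ) := by
  have hsplit : (.mk fun m => (1 + 5 * 3 ^ m - 2 ^ m : ℤ)) =
      (.mk (1 ^ ·) + C 5 * .mk (3 ^ ·) - .mk (2 ^ ·) : ℤ⟦X⟧) := by
    ext m
    simp only [map_add, map_sub, coeff_C_mul, coeff_mk, one_pow]
  have h1 := mk_pow_mul_one_sub_C_mul_X (1 : ℤ)
  have h2 := mk_pow_mul_one_sub_C_mul_X (2 : ℤ)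
  have h3 := mk_pow_mul_one_sub_C_mul_X (3 : ℤ)
  simp only [map_one, map_ofNat, one_mul] at h1 h2 h3
  have hD : (1 - X) * (1 - 2 * X) * (1 - 3 * X) ≠ (0 : ℤ⟦X⟧) := fun h => by
    simpa using congrArg constantCoeff h
  apply mul_left_cancel₀ hD
  rw [mul_cdeSeries_four_two, hsplit]
  simp only [denom, map_ofNat]
  linear_combination -X ^ 3 * ((1 - 2 * X) * (1 - 3 * X) * h1
    + 5 * (1 - X) * (1 - 2 * X) * h3 - (1 - X) * (1 - 3 * X) * h2)

end cdeSeries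

/-- for `n ≥ 3`, `C^{4,2}_n = 1 + 5·3^{n-3} - 2^{n-3}`. -/
theorem stmt8 (n : ℕ) (hn : 3 ≤ n) :
    (Cde 4 2 n : ℤ) = 1 + 5 * 3 ^ (n - 3) - 2 ^ (n - 3) := by
  obtain ⟨m, rfl⟩ := Nat.exists_eq_add_of_le' hn
  calc (Cde 4 2 (m + 3) : ℤ) = coeff (m + 3) (cdeSeries 4 2) := by rw [cdeSeries, coeff_mk]
    _ = 1 + 5 * 3 ^ m - 2 ^ m := by
      rw [cdeSeries.four_two_eq, map_add, coeff_X_pow_mul, coeff_mk, map_add, coeff_C_mul]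
      simp [coeff_one, coeff_X, coeff_X_pow]
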